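/- arXiv:1505.05068 — 2 statements merged into one kernel-verified Lean document; each statement's English description precedes it below -/
import Mathlib

section
/- For every sub-uniform probability measure μ on ℝ there exists a probability space carrying two random variables Q and R such that R is uniformly distributed on [0,1], Q has law μ, and E[R | Q] = Q almost surely. -/
open MeasureTheory Set

/-- A probability measure `μ` on `ℝ` is *sub-uniform* if it is dominated in the convex
order by the uniform distribution `U` on `[0,1]`: `∫ h dμ ≤ E[h(U)]` for every convex
`h : ℝ → ℝ` for which both integrals exist.  (The integral `∫ h dμ` exists, with a
value in `(-∞, ∞]`, precisely when the negative part of `h` is `μ`-integrable; in that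
case the inequality `∫ h dμ ≤ E[h(U)] < ∞` forces `h` to be `μ`-integrable.  The
expectation `E[h(U)]` always exists, since a convex function on `ℝ` is continuous,
hence bounded on `[0,1]`.) -/
def SubUniformMeasure (μ : Measure ℝ) : Prop :=
  ∀ h : ℝ → ℝ, ConvexOn ℝ Set.univ h →
    Integrable (fun x => max (-(h x)) 0) μ →
    Integrable h μ ∧ ∫ x, h x ∂μ ≤ ∫ x in Set.Icc (0:ℝ) 1, h x ∂volume

/-!
This is Strassen's theorem, proved by duality on the compact convex set `K` which carries `ν`. The
laws `P` on `K × K` of the pairs `(X, Y)` with `X ∼ μ`, `Y ∼ ν` and `E[Y | X] = X` are the positive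
functionals on `C(K × K)` with value `∫ g ∂ν - ∫ u ∂μ` at each `g y - u x - c x (y - x)`, where `u`
and `g` are continuous functions on `K` and `c` is a continuous family of linear functionals. By
Riesz extension and Riesz–Markov, `P` exists as soon as these prescribed values are nonnegative on
nonnegative functions. But if `u x + c x (y - x) ≤ g y` for all `x` and `y`, then the supremum over
`x` of the left-hand sides is a convex function of `y` lying between `u` and `g`, so convex order
gives `∫ u ∂μ ≤ ∫ g ∂ν`. That `μ` is carried by `K` as well is convex order for the distance to `K`.
-/

open Filter Topology
open scoped NNReal BoundedContinuousFunction

section RieszExtension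

theorem exists_positiveLinearMap_forall_apply_eq {V F : Type*} [AddCommGroup V] [Module ℝ V]
    [AddCommGroup F] [PartialOrder F] [IsOrderedAddMonoid F] [Module ℝ F] [PosSMulMono ℝ F]
    (T : V →ₗ[ℝ] F) (L : V →ₗ[ℝ] ℝ) (hL : ∀ v, 0 ≤ T v → 0 ≤ L v) (hT : ∀ φ, ∃ v, φ ≤ T v) :
    ∃ Λ : F →ₚ[ℝ] ℝ, ∀ v, Λ (T v) = L v := by
  have hker : L ∈ (LinearMap.ker T).dualAnnihilator := by
    refine (Submodule.mem_dualAnnihilator L).2 fun v hv => ?_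
    rw [LinearMap.mem_ker] at hv
    have hneg : 0 ≤ L (-v) := hL (-v) (by simp [hv])
    rw [map_neg] at hneg
    exact le_antisymm (neg_nonneg.1 hneg) (hL v hv.ge)
  obtain ⟨ℓ, rfl⟩ : ∃ ℓ, T.dualMap ℓ = L := by
    rwa [← LinearMap.range_dualMap_eq_dualAnnihilator_ker] at hker
  obtain ⟨Λ, hΛ, hΛ_nonneg⟩ := riesz_extension (PointedCone.positive ℝ F)
    ⟨LinearMap.range T, ℓ.domRestrict _⟩
    (by rintro ⟨_, v, rfl⟩ hv; exact hL v hv)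
    (fun φ => by
      obtain ⟨v, hv⟩ := hT (-φ)
      exact ⟨⟨T v, v, rfl⟩, by simpa [neg_le_iff_add_nonneg] using hv⟩)
  exact ⟨.mk₀ Λ hΛ_nonneg, fun v => hΛ ⟨T v, v, rfl⟩⟩

variable {X : Type*} [TopologicalSpace X] [CompactSpace X] [T2Space X] [MeasurableSpace X]
  [BorelSpace X]

theorem exists_isFiniteMeasure_forall_integral_eq (Λ : C(X, ℝ) →ₚ[ℝ] ℝ) :
    ∃ P : Measure X, IsFiniteMeasure P ∧ ∀ φ : C(X, ℝ), ∫ x, φ x ∂P = Λ φ := by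
  let Λc : CompactlySupportedContinuousMap X ℝ →ₚ[ℝ] ℝ :=
    { toFun := fun φ => Λ φ.toContinuousMap
      map_add' := fun _ _ => map_add Λ _ _
      map_smul' := fun _ _ => map_smul Λ _ _
      monotone' := fun _ _ hφψ => Λ.monotone' hφψ }
  exact ⟨RealRMK.rieszMeasure Λc, inferInstance, fun φ =>
    RealRMK.integral_rieszMeasure Λc (CompactlySupportedContinuousMap.continuousMapEquiv φ)⟩

theorem exists_isFiniteMeasure_forall_integral_eq_of_nonneg {V : Type*} [AddCommGroup V]
    [Module ℝ V] (T : V →ₗ[ℝ] C(X, ℝ)) (L : V →ₗ[ℝ] ℝ) (hL : ∀ v, 0 ≤ T v → 0 ≤ L v)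
    (hT : 1 ∈ LinearMap.range T) :
    ∃ P : Measure X, IsFiniteMeasure P ∧ ∀ v, ∫ x, T v x ∂P = L v := by
  obtain ⟨e, he⟩ := hT
  obtain ⟨Λ, hΛ⟩ := exists_positiveLinearMap_forall_apply_eq T L hL fun φ =>
    ⟨‖φ‖ • e, fun x => by simpa [he] using (le_abs_self _).trans (φ.norm_coe_le_norm x)⟩
  obtain ⟨P, hP, hPΛ⟩ := exists_isFiniteMeasure_forall_integral_eq Λ
  exact ⟨P, hP, fun v => (hPΛ (T v)).trans (hΛ v)⟩

end RieszExtension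

section ConditionalExpectation

variable {Ω X E : Type*} [MeasurableSpace Ω] [TopologicalSpace X] [HasOuterApproxClosed X]
  [MeasurableSpace X] [BorelSpace X] [NormedAddCommGroup E] [NormedSpace ℝ E]
  {P : Measure Ω} {Q : Ω → X}

theorem setIntegral_preimage_eq_zero_of_isClosed {w : Ω → E} (hQ : Measurable Q)
    (hw : Integrable w P) (h : ∀ F : X →ᵇ ℝ≥0, ∫ ω, (F (Q ω) : ℝ) • w ω ∂P = 0)
    {C : Set X} (hC : IsClosed C) : ∫ ω in Q ⁻¹' C, w ω ∂P = 0 := by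
  have htendsto : Tendsto (fun n => ∫ ω, (hC.apprSeq n (Q ω) : ℝ) • w ω ∂P) atTop
      (𝓝 (∫ ω, (Q ⁻¹' C).indicator w ω ∂P)) := by
    refine tendsto_integral_of_dominated_convergence (fun ω => ‖w ω‖)
      (fun n => ?_) hw.norm (fun n => .of_forall fun ω => ?_) (.of_forall fun ω => ?_)
    · exact AEStronglyMeasurable.smul
        (((hC.apprSeq n).continuous.measurable.comp hQ).coe_nnreal_real.aestronglyMeasurable)
        hw.aestronglyMeasurable
    · rw [norm_smul, NNReal.norm_eq]
      exact mul_le_of_le_one_left (norm_nonneg _)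
        (HasOuterApproxClosed.apprSeq_apply_le_one hC n (Q ω))
    · have hlim := tendsto_pi_nhds.1 (HasOuterApproxClosed.tendsto_apprSeq hC) (Q ω)
      convert! (NNReal.tendsto_coe.2 hlim).smul_const (w ω) using 2
      by_cases hω : Q ω ∈ C <;> simp [hω]
  simp only [h] at htendsto
  rw [← integral_indicator (hQ hC.measurableSet)]
  exact tendsto_nhds_unique htendsto tendsto_const_nhds

theorem setIntegral_preimage_eq_zero_of_forall_integral_smul_eq_zero {w : Ω → E}
    (hQ : Measurable Q) (hw : Integrable w P)
    (h : ∀ F : X →ᵇ ℝ≥0, ∫ ω, (F (Q ω) : ℝ) • w ω ∂P = 0) {B : Set X} (hB : MeasurableSet B) :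
    ∫ ω in Q ⁻¹' B, w ω ∂P = 0 := by
  have hclosed {C : Set X} (hC : IsClosed C) : ∫ ω in Q ⁻¹' C, w ω ∂P = 0 :=
    setIntegral_preimage_eq_zero_of_isClosed hQ hw h hC
  have hcompl {A : Set X} (hA : MeasurableSet A) (hA0 : ∫ ω in Q ⁻¹' A, w ω ∂P = 0) :
      ∫ ω in Q ⁻¹' Aᶜ, w ω ∂P = 0 := by
    have huniv : ∫ ω, w ω ∂P = 0 := by simpa using hclosed isClosed_univ
    rw [preimage_compl, setIntegral_compl (hQ hA) hw, hA0, huniv, sub_zero]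
  induction B, hB using MeasurableSet.induction_on_open with
  | isOpen U hU => exact compl_compl U ▸ hcompl hU.measurableSet.compl (hclosed hU.isClosed_compl)
  | compl A hA ih => exact hcompl hA ih
  | iUnion A hdisj hA ih =>
    rw [preimage_iUnion, integral_iUnion (fun n => hQ (hA n))
      (fun m n hmn => (hdisj hmn).preimage Q) hw.integrableOn]
    simp [ih]

theorem ae_eq_condExp_comap_of_forall_integral_smul_eq [CompleteSpace E] {u v : Ω → E}
    (hQ : Measurable Q) [SigmaFinite (P.trim hQ.comap_le)] (hu : Integrable u P)
    (hv : Integrable v P) (hum : AEStronglyMeasurable[MeasurableSpace.comap Q inferInstance] u P)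
    (h : ∀ F : X →ᵇ ℝ≥0,
      ∫ ω, (F (Q ω) : ℝ) • u ω ∂P = ∫ ω, (F (Q ω) : ℝ) • v ω ∂P) :
    u =ᵐ[P] P[v | MeasurableSpace.comap Q inferInstance] := by
  refine ae_eq_condExp_of_forall_setIntegral_eq hQ.comap_le hv (fun _ _ _ => hu.integrableOn)
    ?_ hum
  have hsmul {w : Ω → E} (hw : Integrable w P) (F : X →ᵇ ℝ≥0) :
      Integrable (fun ω => (F (Q ω) : ℝ) • w ω) P :=
    hw.bdd_smul (nndist F 0)
      (F.continuous.measurable.comp hQ).coe_nnreal_real.aestronglyMeasurable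
      (.of_forall fun ω => by
        simpa using NNReal.coe_le_coe.2 (BoundedContinuousFunction.NNReal.upper_bound F (Q ω)))
  rintro _ ⟨B, hB, rfl⟩ -
  rw [← sub_eq_zero, ← integral_sub hu.integrableOn hv.integrableOn]
  refine setIntegral_preimage_eq_zero_of_forall_integral_smul_eq_zero hQ (hu.sub hv)
    (fun F => ?_) hB
  simp only [Pi.sub_apply, smul_sub]
  rw [integral_sub (hsmul hu F) (hsmul hv F), h F, sub_self]

end ConditionalExpectation

section ConvexOrder

theorem convexOn_ciSup {ι E : Type*} [Nonempty ι] [AddCommGroup E] [Module ℝ E] {s : Set E}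
    {f : ι → E → ℝ} (hf : ∀ i, ConvexOn ℝ s (f i))
    (hbdd : ∀ x ∈ s, BddAbove (range fun i => f i x)) :
    ConvexOn ℝ s fun x => ⨆ i, f i x := by
  refine ⟨(hf (Classical.arbitrary ι)).1, fun x hx y hy a b ha hb hab => ciSup_le fun i => ?_⟩
  calc f i (a • x + b • y) ≤ a • f i x + b • f i y := (hf i).2 hx hy ha hb hab
    _ ≤ a • (⨆ i, f i x) + b • ⨆ i, f i y := by
      gcongr
      exacts [le_ciSup (hbdd x hx) i, le_ciSup (hbdd y hy) i]

variable {E : Type*} [SeminormedAddCommGroup E] [NormedSpace ℝ E]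

theorem convexOn_infDist {s : Set E} (hs : Convex ℝ s) (hne : s.Nonempty) :
    ConvexOn ℝ univ fun x => Metric.infDist x s := by
  refine ⟨convex_univ, fun x _ y _ a b ha hb hab => le_of_forall_pos_le_add fun ε hε => ?_⟩
  obtain ⟨p, hp, hxp⟩ := (Metric.infDist_lt_iff hne).1 (lt_add_of_pos_right (Metric.infDist x s) hε)
  obtain ⟨q, hq, hyq⟩ := (Metric.infDist_lt_iff hne).1 (lt_add_of_pos_right (Metric.infDist y s) hε)
  calc Metric.infDist (a • x + b • y) s
      ≤ dist (a • x + b • y) (a • p + b • q) :=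
        Metric.infDist_le_dist_of_mem (hs hp hq ha hb hab)
    _ ≤ dist (a • x) (a • p) + dist (b • y) (b • q) := dist_add_add_le _ _ _ _
    _ = a * dist x p + b * dist y q := by
      simp only [dist_smul₀, Real.norm_of_nonneg ha, Real.norm_of_nonneg hb]
    _ ≤ a * (Metric.infDist x s + ε) + b * (Metric.infDist y s + ε) := by gcongr
    _ = a • Metric.infDist x s + b • Metric.infDist y s + ε := by
      simp only [smul_eq_mul]; linear_combination ε * hab

variable [MeasurableSpace E]

/-- The convex order `μ ≤ ν`: every continuous convex function has a smaller `μ`-integral than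
`ν`-integral. Test functions range over the `ν`-integrable ones whose negative part is
`μ`-integrable, and `μ`-integrability is part of the conclusion, so that neither Bochner integral
takes its junk value. -/
def ConvexOrderLE (μ ν : Measure E) : Prop :=
  ∀ h : E → ℝ, ConvexOn ℝ univ h → Continuous h → Integrable h ν →
    Integrable (fun x => max (-(h x)) 0) μ → Integrable h μ ∧ ∫ x, h x ∂μ ≤ ∫ x, h x ∂ν

theorem ConvexOrderLE.ae_mem {μ ν : Measure E} (hμν : ConvexOrderLE μ ν) {s : Set E}
    (hs : Convex ℝ s) (hclosed : IsClosed s) (hne : s.Nonempty) (hν : ∀ᵐ x ∂ν, x ∈ s) :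
    ∀ᵐ x ∂μ, x ∈ s := by
  have hνzero : (fun x => Metric.infDist x s) =ᵐ[ν] 0 :=
    hν.mono fun x hx => Metric.infDist_zero_of_mem hx
  obtain ⟨hint, hle⟩ := hμν _ (convexOn_infDist hs hne) (Metric.continuous_infDist_pt s)
    ((integrable_zero E ℝ ν).congr hνzero.symm) (by simp [Metric.infDist_nonneg])
  have hμzero : ∫ x, Metric.infDist x s ∂μ = 0 :=
    le_antisymm (by simpa [integral_congr_ae hνzero] using hle)
      (integral_nonneg fun _ => Metric.infDist_nonneg)
  filter_upwards [(integral_eq_zero_iff_of_nonneg (fun _ => Metric.infDist_nonneg) hint).1 hμzero]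
    with x hx
  exact (hclosed.mem_iff_infDist_zero hne).2 hx

end ConvexOrder

theorem integrable_of_continuous_of_compactSpace {X E : Type*} [TopologicalSpace X]
    [CompactSpace X] [MeasurableSpace X] [OpensMeasurableSpace X] [NormedAddCommGroup E]
    {P : Measure X} [IsFiniteMeasureOnCompacts P] {f : X → E} (hf : Continuous f) :
    Integrable f P :=
  hf.integrable_of_hasCompactSupport (.of_compactSpace f)

theorem exists_isProbabilityMeasure_map_val_eq {α : Type*} [MeasurableSpace α] {s : Set α}
    (hs : MeasurableSet s) {ρ : Measure α} [IsProbabilityMeasure ρ] (hρ : ∀ᵐ x ∂ρ, x ∈ s) :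
    ∃ ρs : Measure s, IsProbabilityMeasure ρs ∧ ρs.map (↑) = ρ := by
  refine ⟨ρ.comap (↑), (MeasurableEmbedding.subtype_coe hs).isProbabilityMeasure_comap (by simpa),
    ?_⟩
  rw [map_comap_subtype_coe hs, Measure.restrict_eq_self_of_ae_mem hρ]

section MartingaleCoupling

variable {E : Type*} [NormedAddCommGroup E] [NormedSpace ℝ E] {K : Set E} [CompactSpace K]

/-- The supremum over `x ∈ K` of the affine functions on `E` with value `u x` and slope `c x`
at `x`. -/
noncomputable def affineEnvelope (u : C(K, ℝ)) (c : C(K, StrongDual ℝ E)) (y : E) : ℝ :=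
  ⨆ x : K, (u x + c x (y - x))

theorem bddAbove_range_affine (u : C(K, ℝ)) (c : C(K, StrongDual ℝ E)) (y : E) :
    BddAbove (range fun x : K => u x + c x (y - x)) :=
  (isCompact_range (by fun_prop)).bddAbove

theorem convexOn_affineEnvelope [Nonempty K] (u : C(K, ℝ)) (c : C(K, StrongDual ℝ E)) :
    ConvexOn ℝ univ (affineEnvelope u c) := by
  refine convexOn_ciSup (fun x => ⟨convex_univ, fun y _ z _ a b _ _ hab => le_of_eq ?_⟩)
    fun y _ => bddAbove_range_affine u c y
  simp only [map_sub, map_add, map_smul, smul_eq_mul]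
  linear_combination (c x x - u x) * hab

theorem continuous_affineEnvelope (u : C(K, ℝ)) (c : C(K, StrongDual ℝ E)) :
    Continuous (affineEnvelope u c) := by
  have hcont : Continuous fun y : E => sSup ((fun x : K => u x + c x (y - x)) '' univ) :=
    isCompact_univ.continuous_sSup (f := fun y x => u x + c x (y - x)) <| by
      simp only [Function.HasUncurry.uncurry, id]
      fun_prop
  simp only [image_univ] at hcont
  exact hcont

theorem le_affineEnvelope (u : C(K, ℝ)) (c : C(K, StrongDual ℝ E)) (x : K) :
    u x ≤ affineEnvelope u c x := by
  simpa [affineEnvelope] using le_ciSup (bddAbove_range_affine u c x) x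

variable [MeasurableSpace E] [BorelSpace E] {μ ν : Measure K}

theorem ConvexOrderLE.integral_le_integral_of_affine_le [IsFiniteMeasure μ] [IsFiniteMeasure ν]
    [Nonempty K] (hμν : ConvexOrderLE (μ.map Subtype.val) (ν.map Subtype.val)) {u g : C(K, ℝ)}
    {c : C(K, StrongDual ℝ E)} (h : ∀ x y : K, u x + c x (y - x) ≤ g y) :
    ∫ x, u x ∂μ ≤ ∫ y, g y ∂ν := by
  have hval : MeasurableEmbedding (Subtype.val : K → E) :=
    .subtype_coe (isCompact_iff_compactSpace.2 inferInstance).measurableSet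
  have hint_map {ρ : Measure K} [IsFiniteMeasure ρ] {f : E → ℝ} (hf : Continuous f) :
      Integrable f (ρ.map Subtype.val) :=
    hval.integrable_map_iff.2
      (integrable_of_continuous_of_compactSpace (hf.comp continuous_subtype_val))
  have hcont : Continuous (affineEnvelope u c) := continuous_affineEnvelope u c
  calc ∫ x, u x ∂μ ≤ ∫ x : K, affineEnvelope u c x ∂μ :=
        integral_mono (integrable_of_continuous_of_compactSpace u.continuous)
          (integrable_of_continuous_of_compactSpace (by fun_prop)) (le_affineEnvelope u c)
    _ = ∫ x, affineEnvelope u c x ∂(μ.map Subtype.val) := (hval.integral_map _).symm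
    _ ≤ ∫ y, affineEnvelope u c y ∂(ν.map Subtype.val) :=
        (hμν _ (convexOn_affineEnvelope u c) hcont (hint_map hcont)
          (hint_map (hcont.neg.max continuous_const))).2
    _ = ∫ y : K, affineEnvelope u c y ∂ν := hval.integral_map _
    _ ≤ ∫ y, g y ∂ν :=
        integral_mono (integrable_of_continuous_of_compactSpace (by fun_prop))
          (integrable_of_continuous_of_compactSpace g.continuous) fun y => ciSup_le fun x => h x y

/-- The functions `(x, y) ↦ g y - u x - c x (y - x)` on `K × K`, depending linearly on `(u, g, c)`.
A martingale coupling of `μ` and `ν` is a measure which integrates each of them to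
`∫ g ∂ν - ∫ u ∂μ`. -/
noncomputable def martingaleTest (K : Set E) :
    C(K, ℝ) × C(K, ℝ) × C(K, StrongDual ℝ E) →ₗ[ℝ] C(K × K, ℝ) where
  toFun a := ⟨fun z => a.2.1 z.2 - a.1 z.1 - a.2.2 z.1 (z.2 - z.1), by fun_prop⟩
  map_add' a b := by
    ext z
    simp only [Prod.fst_add, Prod.snd_add, ContinuousMap.coe_mk, ContinuousMap.add_apply, add_apply]
    ring
  map_smul' r a := by
    ext z
    simp only [Prod.smul_fst, Prod.smul_snd, ContinuousMap.coe_mk, ContinuousMap.smul_apply,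
      smul_apply, smul_sub, RingHom.id_apply]

theorem ConvexOrderLE.exists_forall_integral_martingaleTest_eq [IsFiniteMeasure μ]
    [IsFiniteMeasure ν] [Nonempty K]
    (hμν : ConvexOrderLE (μ.map Subtype.val) (ν.map Subtype.val)) :
    ∃ P : Measure (K × K), IsFiniteMeasure P ∧ ∀ u g c,
      ∫ z, martingaleTest K (u, g, c) z ∂P = ∫ y, g y ∂ν - ∫ x, u x ∂μ := by
  have hint (ρ : Measure K) [IsFiniteMeasure ρ] (f : C(K, ℝ)) : Integrable f ρ :=
    integrable_of_continuous_of_compactSpace f.continuous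
  let L : C(K, ℝ) × C(K, ℝ) × C(K, StrongDual ℝ E) →ₗ[ℝ] ℝ :=
    { toFun := fun a => ∫ y, a.2.1 y ∂ν - ∫ x, a.1 x ∂μ
      map_add' := fun a b => by
        simp only [Prod.fst_add, Prod.snd_add, ContinuousMap.add_apply,
          integral_add (hint _ _) (hint _ _)]
        ring
      map_smul' := fun r a => by
        simp only [Prod.smul_fst, Prod.smul_snd, ContinuousMap.smul_apply, integral_smul,
          smul_sub, RingHom.id_apply] }
  obtain ⟨P, hP, hPL⟩ := exists_isFiniteMeasure_forall_integral_eq_of_nonneg (martingaleTest K) L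
    (fun a ha => sub_nonneg.2 <| hμν.integral_le_integral_of_affine_le (c := a.2.2) fun x y => by
      have hxy : 0 ≤ a.2.1 y - a.1 x - a.2.2 x (y - x) := ha (x, y)
      linarith)
    ⟨(0, 1, 0), by ext z; simp [martingaleTest]⟩
  exact ⟨P, hP, fun u g c => hPL (u, g, c)⟩

theorem ae_eq_condExp_of_forall_integral_dual_eq_zero [CompleteSpace E] {P : Measure (K × K)}
    [IsFiniteMeasure P]
    (h : ∀ c : C(K, StrongDual ℝ E), ∫ z, c z.1 (z.2 - z.1) ∂P = 0) :
    (fun z => (z.1 : E)) =ᵐ[P]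
      P[fun z => (z.2 : E) | MeasurableSpace.comap (fun z : K × K => (z.1 : E)) inferInstance] := by
  have hfst : Integrable (fun z => (z.1 : E)) P :=
    integrable_of_continuous_of_compactSpace (by fun_prop)
  have hsnd : Integrable (fun z => (z.2 : E)) P :=
    integrable_of_continuous_of_compactSpace (by fun_prop)
  have hcomap : MeasurableSpace.comap (fun z : K × K => (z.1 : E)) inferInstance =
      MeasurableSpace.comap (Prod.fst : K × K → K) inferInstance :=
    (MeasurableSpace.comap_comp ..).symm
  rw [hcomap]
  refine ae_eq_condExp_comap_of_forall_integral_smul_eq measurable_fst hfst hsnd ?_ fun F => ?_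
  · exact (continuous_subtype_val.stronglyMeasurable.comp_measurable
      (comap_measurable Prod.fst)).aestronglyMeasurable
  · refine (SeparatingDual.eq_iff_forall_dual_eq (R := ℝ)).2 fun ℓ => ?_
    have hℓ : ∫ z : K × K, (F z.1 : ℝ) • ℓ (z.2 - z.1) ∂P = 0 :=
      h ⟨fun x => (F x : ℝ) • ℓ, by fun_prop⟩
    simp only [map_sub, smul_sub, ← map_smul] at hℓ
    rw [integral_sub (integrable_of_continuous_of_compactSpace (by fun_prop))
      (integrable_of_continuous_of_compactSpace (by fun_prop)), sub_eq_zero] at hℓ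
    rw [← ℓ.integral_comp_comm (integrable_of_continuous_of_compactSpace (by fun_prop)),
      ← ℓ.integral_comp_comm (integrable_of_continuous_of_compactSpace (by fun_prop)), hℓ]

theorem ConvexOrderLE.exists_martingale_coupling_subtype [CompleteSpace E] [IsFiniteMeasure μ]
    [IsFiniteMeasure ν] [Nonempty K]
    (hμν : ConvexOrderLE (μ.map Subtype.val) (ν.map Subtype.val)) :
    ∃ P : Measure (K × K), P.fst = μ ∧ P.snd = ν ∧
      P[fun z => (z.2 : E) | MeasurableSpace.comap (fun z : K × K => (z.1 : E)) inferInstance]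
        =ᵐ[P] fun z => (z.1 : E) := by
  obtain ⟨P, hP, htest⟩ := hμν.exists_forall_integral_martingaleTest_eq
  refine ⟨P, ?_, ?_, (ae_eq_condExp_of_forall_integral_dual_eq_zero fun c => ?_).symm⟩
  · refine ext_of_forall_integral_eq_of_IsFiniteMeasure fun F => ?_
    rw [Measure.fst, integral_map (by fun_prop) (by fun_prop)]
    simpa [martingaleTest, integral_neg] using htest F.toContinuousMap 0 0
  · refine ext_of_forall_integral_eq_of_IsFiniteMeasure fun F => ?_
    rw [Measure.snd, integral_map (by fun_prop) (by fun_prop)]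
    simpa [martingaleTest] using htest 0 F.toContinuousMap 0
  · simpa [martingaleTest, neg_add_eq_sub] using htest 0 0 (-c)

end MartingaleCoupling

theorem subUniformMeasure_exists_martingale_coupling_general {E : Type*} [NormedAddCommGroup E]
    [NormedSpace ℝ E] [CompleteSpace E] [MeasurableSpace E] [BorelSpace E] {K : Set E}
    (hK : IsCompact K) (hconvex : Convex ℝ K) {μ ν : Measure E} [IsProbabilityMeasure μ]
    [IsProbabilityMeasure ν] (hν : ∀ᵐ x ∂ν, x ∈ K) (hμν : ConvexOrderLE μ ν) :
    ∃ P : Measure (K × K), IsProbabilityMeasure P ∧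
      P.map (fun z => (z.1 : E)) = μ ∧ P.map (fun z => (z.2 : E)) = ν ∧
      P[fun z => (z.2 : E) | MeasurableSpace.comap (fun z : K × K => (z.1 : E)) inferInstance]
        =ᵐ[P] fun z => (z.1 : E) := by
  have hμ : ∀ᵐ x ∂μ, x ∈ K := hμν.ae_mem hconvex hK.isClosed hν.exists hν
  have : CompactSpace K := isCompact_iff_compactSpace.1 hK
  have : Nonempty K := Set.Nonempty.to_subtype hν.exists
  obtain ⟨μK, hμK, rfl⟩ := exists_isProbabilityMeasure_map_val_eq hK.measurableSet hμ
  obtain ⟨νK, hνK, rfl⟩ := exists_isProbabilityMeasure_map_val_eq hK.measurableSet hν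
  obtain ⟨P, rfl, rfl, hcondExp⟩ := hμν.exists_martingale_coupling_subtype
  refine ⟨P, ⟨?_⟩, ?_, ?_, hcondExp⟩
  · rw [← Measure.fst_univ, measure_univ]
  · rw [Measure.fst, Measure.map_map measurable_subtype_coe measurable_fst]; rfl
  · rw [Measure.snd, Measure.map_map measurable_subtype_coe measurable_snd]; rfl

/-- For every sub-uniform probability measure `μ` on `ℝ` there is a probability space
carrying random variables `Q` and `R` such that `R` is uniformly distributed on
`[0,1]`, `Q` has law `μ`, and `E[R | Q] = Q` almost surely (conditioning on the
σ-algebra generated by `Q`). -/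
theorem subUniformMeasure_exists_martingale_coupling (μ : Measure ℝ)
    [IsProbabilityMeasure μ] (hμ : SubUniformMeasure μ) :
    ∃ (Ω : Type) (mΩ : MeasurableSpace Ω) (P : Measure Ω) (Q R : Ω → ℝ),
      IsProbabilityMeasure P ∧ Measurable Q ∧ Measurable R ∧
      P.map R = volume.restrict (Set.Icc (0:ℝ) 1) ∧
      P.map Q = μ ∧
      P[R | MeasurableSpace.comap Q Real.measurableSpace] =ᵐ[P] Q := by
  have : IsProbabilityMeasure (volume.restrict (Icc (0 : ℝ) 1)) := ⟨by simp⟩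
  obtain ⟨P, hP, hQ, hR, hcondExp⟩ := subUniformMeasure_exists_martingale_coupling_general
    isCompact_Icc (convex_Icc 0 1) (ae_restrict_mem measurableSet_Icc)
    (show ConvexOrderLE μ _ from fun h hconvex _ _ hneg => hμ h hconvex hneg)
  exact ⟨_, _, P, _, _, hP, by fun_prop, by fun_prop, hR, hQ, hcondExp⟩
end

section
/- Let Q be a mid-p-value under its null hypothesis, with support S_Q and distribution function F_Q. For every x ∈ S_Q, F_Q(x) = sup{ F_W(x) : F_W is the distribution function of a sub-uniform probability measure and F_W(y) = F_Q(y) for all y ∈ S_Q ∩ [0,x) }, where the constraint 'F_W = F_Q on S_Q ∩ [0,x)' is vacuous when S_Q ∩ [0,x) is empty. In words, among all sub-uniform distributions agreeing with F_Q on the supported points below x, the mid-p-value distribution attains the largest possible value at x. -/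
open MeasureTheory Set

/-- The (topological) support of a measure `ν` on `ℝ`: the set of points all of whose
neighbourhoods have positive measure.  This is the smallest closed set of full
measure. -/
def measureSupport (ν : Measure ℝ) : Set ℝ :=
  {x : ℝ | ∀ U ∈ nhds x, 0 < ν U}

/-!
Exchanging the coordinates of `μ ⊗ μ` gives `∫_S midPValue μ dμ = μ(S)² / 2` for every upper
set `S`. Hence, for a monotone statistic `T`, the mid-p-value based on `T` is the conditional
expectation given `T` of the mid-p-value based on the full data, so by Jensen's inequality
coarsening decreases the mid-p-value in the convex order. Every law on the line is a monotone image
of the uniform law, whose mid-p-value `1 - u` is uniform: mid-p-values are sub-uniform.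

For the maximality put `ψ_W(x) = E[(x - W)⁺]`. The tangent of the convex function `ψ_W` at `x` has
slope `F_W(x)`, and sub-uniformity gives `ψ_W(c) ≤ c² / 2` on `[0, 1]`; the choice `c = F_W(x)`
yields `ψ_W(x) ≤ x F_W(x) - F_W(x)² / 2`, with equality for the mid-p-value law by the identity
above.
Agreement on the support below `x` forces `F_Q ≤ F_W` below `x`, hence `ψ_Q(x) ≤ ψ_W(x)`, that is
`(F_W(x) - F_Q(x)) (x - (F_Q(x) + F_W(x)) / 2) ≥ 0`. As `x ≤ F_Q(x)` on the support, this excludes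
`F_W(x) > F_Q(x)`.
-/

section MidPValue

/-- The mid-p-value of `t` as the observed value of a statistic with null law `μ`, large values
being the extreme ones. -/
noncomputable def midPValue {α : Type*} [Preorder α] [MeasurableSpace α] (μ : Measure α) (t : α) :
    ℝ :=
  (μ.real (Ici t) + μ.real (Ioi t)) / 2

section Preorder

variable {α : Type*} [Preorder α] [MeasurableSpace α]

lemma midPValue_nonneg (μ : Measure α) (t : α) : 0 ≤ midPValue μ t := by
  unfold midPValue
  positivity

variable (μ : Measure α) [IsFiniteMeasure μ]

lemma antitone_midPValue : Antitone (midPValue μ) := fun _ _ hst ↦ by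
  unfold midPValue
  gcongr <;> finiteness

lemma midPValue_le_measureReal_Ici (t : α) : midPValue μ t ≤ μ.real (Ici t) := by
  have : μ.real (Ioi t) ≤ μ.real (Ici t) := measureReal_mono Ioi_subset_Ici_self
  unfold midPValue
  linarith

lemma midPValue_mem_Icc (t : α) : midPValue μ t ∈ Icc 0 (μ.real univ) :=
  ⟨midPValue_nonneg μ t,
    (midPValue_le_measureReal_Ici μ t).trans (measureReal_mono (subset_univ _))⟩

lemma ofReal_midPValue (t : α) :
    ENNReal.ofReal (midPValue μ t) = (μ (Ici t) + μ (Ioi t)) / 2 := by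
  rw [midPValue, ENNReal.ofReal_div_of_pos two_pos,
    ENNReal.ofReal_add measureReal_nonneg measureReal_nonneg, ofReal_measureReal,
    ofReal_measureReal, ENNReal.ofReal_ofNat]

end Preorder

variable {α : Type*} [LinearOrder α] [TopologicalSpace α] [OrderTopology α]
  [MeasurableSpace α] [BorelSpace α] (μ : Measure α) [IsFiniteMeasure μ]

lemma measurable_midPValue : Measurable (midPValue μ) := (antitone_midPValue μ).measurable

lemma integrable_comp_midPValue {h : ℝ → ℝ} (hh : Continuous h) :
    Integrable (fun t ↦ h (midPValue μ t)) μ := by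
  obtain ⟨C, hC⟩ :=
    isCompact_Icc.exists_bound_of_continuousOn (s := Icc 0 (μ.real univ)) hh.continuousOn
  exact .of_bound (hh.measurable.comp (measurable_midPValue μ)).aestronglyMeasurable C
    (.of_forall fun t ↦ hC _ (midPValue_mem_Icc μ t))

lemma integrable_midPValue : Integrable (midPValue μ) μ :=
  integrable_comp_midPValue μ continuous_id

variable [SecondCountableTopology α]

-- Swapping the coordinates turns `{t < s}` into `{s < t}`, the complement of `{t ≤ s}`.
lemma lintegral_measure_Ici_add_measure_Ioi :
    ∫⁻ t, (μ (Ici t) + μ (Ioi t)) ∂μ = μ univ ^ 2 := by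
  have hle : MeasurableSet {p : α × α | p.1 ≤ p.2} := measurableSet_le'
  calc ∫⁻ t, (μ (Ici t) + μ (Ioi t)) ∂μ
      = ∫⁻ t, μ (Ici t) ∂μ + ∫⁻ t, μ (Ioi t) ∂μ :=
        lintegral_add_left (measurable_measure_prodMk_left hle) _
    _ = μ.prod μ {p | p.1 ≤ p.2} + μ.prod μ {p | p.1 ≤ p.2}ᶜ := by
        rw [Measure.prod_apply hle, Measure.prod_apply_symm hle.compl]
        simp only [preimage_ofPred_eq, compl_ofPred, not_le]
        rfl
    _ = μ univ ^ 2 := by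
        rw [measure_add_measure_compl hle, Measure.prod_apply .univ, sq]
        simp

lemma setLIntegral_midPValue_of_isUpperSet {S : Set α} (hS : IsUpperSet S) :
    ∫⁻ t in S, ENNReal.ofReal (midPValue μ t) ∂μ = μ S ^ 2 / 2 := by
  have hSm : MeasurableSet S := hS.ordConnected.measurableSet
  have hrestrict : ∀ t ∈ S, ENNReal.ofReal (midPValue μ t) =
      (μ.restrict S (Ici t) + μ.restrict S (Ioi t)) / 2 := fun t ht ↦ by
    rw [ofReal_midPValue, Measure.restrict_eq_self _ (hS.Ici_subset ht),
      Measure.restrict_eq_self _ (hS.Ioi_subset ht)]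
  rw [setLIntegral_congr_fun hSm hrestrict]
  simp_rw [div_eq_mul_inv]
  rw [lintegral_mul_const' _ _ (by simp), lintegral_measure_Ici_add_measure_Ioi,
    Measure.restrict_apply_univ]

lemma setIntegral_midPValue_of_isUpperSet {S : Set α} (hS : IsUpperSet S) :
    ∫ t in S, midPValue μ t ∂μ = μ.real S ^ 2 / 2 := by
  rw [integral_eq_lintegral_of_nonneg_ae (.of_forall (midPValue_nonneg μ))
    (measurable_midPValue μ).aestronglyMeasurable, setLIntegral_midPValue_of_isUpperSet μ hS]
  simp [measureReal_def]

variable {β : Type*} [LinearOrder β] [TopologicalSpace β] [OrderTopology β]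
  [SecondCountableTopology β] [MeasurableSpace β] [BorelSpace β] {T : α → β}

lemma map_withDensity_midPValue (hT : Monotone T) :
    (μ.withDensity fun a ↦ ENNReal.ofReal (midPValue μ a)).map T =
      (μ.map T).withDensity fun b ↦ ENNReal.ofReal (midPValue (μ.map T) b) := by
  have := isFiniteMeasure_withDensity_ofReal (integrable_midPValue μ).2
  refine Measure.ext_of_Ici _ _ fun b ↦ ?_
  have hTb : IsUpperSet (T ⁻¹' Ici b) := (isUpperSet_Ici b).preimage hT
  rw [Measure.map_apply hT.measurable measurableSet_Ici,
    withDensity_apply _ (hT.measurable measurableSet_Ici), withDensity_apply _ measurableSet_Ici,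
    setLIntegral_midPValue_of_isUpperSet _ hTb,
    setLIntegral_midPValue_of_isUpperSet _ (isUpperSet_Ici b),
    Measure.map_apply hT.measurable measurableSet_Ici]

lemma setIntegral_preimage_midPValue (hT : Monotone T) {B : Set β} (hB : MeasurableSet B) :
    ∫ a in T ⁻¹' B, midPValue (μ.map T) (T a) ∂μ = ∫ a in T ⁻¹' B, midPValue μ a ∂μ := by
  have hTm := hT.measurable
  rw [← setIntegral_map hB (measurable_midPValue _).aestronglyMeasurable hTm.aemeasurable,
    integral_eq_lintegral_of_nonneg_ae (.of_forall (midPValue_nonneg _))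
      (measurable_midPValue _).aestronglyMeasurable,
    integral_eq_lintegral_of_nonneg_ae (.of_forall (midPValue_nonneg μ))
      (measurable_midPValue μ).aestronglyMeasurable,
    ← withDensity_apply _ hB, ← withDensity_apply _ (hTm hB), ← map_withDensity_midPValue μ hT,
    Measure.map_apply hTm hB]

lemma midPValue_map_comp_ae_eq_condExp (hT : Monotone T) :
    midPValue (μ.map T) ∘ T =ᵐ[μ] μ[midPValue μ | MeasurableSpace.comap T inferInstance] := by
  have hTm := hT.measurable
  have hint : Integrable (midPValue (μ.map T) ∘ T) μ :=
    (integrable_midPValue (μ.map T)).comp_measurable hTm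
  refine ae_eq_condExp_of_forall_setIntegral_eq hTm.comap_le (integrable_midPValue μ)
    (fun _ _ _ ↦ hint.integrableOn) ?_
    ((measurable_midPValue _).comp (comap_measurable T)).aestronglyMeasurable
  rintro _ ⟨B, hB, rfl⟩ -
  exact setIntegral_preimage_midPValue μ hT hB

lemma integral_comp_midPValue_map_le {h : ℝ → ℝ} (hh : ConvexOn ℝ univ h)
    (hT : Monotone T) :
    ∫ b, h (midPValue (μ.map T) b) ∂μ.map T ≤ ∫ a, h (midPValue μ a) ∂μ := by
  have hcont : Continuous h := continuousOn_univ.1 (hh.continuousOn isOpen_univ)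
  have hTm := hT.measurable
  have hint := integrable_comp_midPValue (μ.map T) hcont
  rw [integral_map hTm.aemeasurable hint.aestronglyMeasurable,
    ← integral_condExp hTm.comap_le (f := fun a ↦ h (midPValue μ a))]
  refine integral_mono_ae (hint.comp_measurable hTm) integrable_condExp ?_
  filter_upwards [midPValue_map_comp_ae_eq_condExp μ hT,
    hh.map_condExp_le_of_finiteDimensional hTm.comap_le (integrable_midPValue μ)
      (integrable_comp_midPValue μ hcont)] with a hmid hJensen
  simpa only [Function.comp_apply, ← hmid] using! hJensen

end MidPValue

section Quantile

open ProbabilityTheory Filter Topology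

lemma upperSemicontinuous_stieltjesFunction {R : Type*} [LinearOrder R] [TopologicalSpace R]
    (F : StieltjesFunction R) : UpperSemicontinuous F := fun x c hc ↦ by
  rw [← nhdsLE_sup_nhdsGE, eventually_sup]
  refine ⟨?_, (F.right_continuous x).eventually_lt_const hc⟩
  filter_upwards [self_mem_nhdsWithin] with y hy
  exact (F.mono hy).trans_lt hc

variable (μ : Measure ℝ)

lemma exists_quantile (u : Ioo (0 : ℝ) 1) :
    ∃ t, ∀ s, t ≤ s ↔ (u : ℝ) ≤ cdf μ s := by
  set S : Set ℝ := {s | (u : ℝ) ≤ cdf μ s}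
  have hne : S.Nonempty :=
    ((tendsto_cdf_atTop μ).eventually_const_le u.2.2).exists
  have hbdd : BddBelow S := by
    obtain ⟨b, hb⟩ := ((tendsto_cdf_atBot μ).eventually_lt_const u.2.1).exists
    exact ⟨b, fun s hs ↦ ((monotone_cdf μ).reflect_lt (hb.trans_le hs)).le⟩
  have hmem : sInf S ∈ S :=
    ((upperSemicontinuous_stieltjesFunction (cdf μ)).isClosed_preimage (u : ℝ)).csInf_mem hne hbdd
  exact ⟨sInf S, fun s ↦ ⟨fun hs ↦ hmem.trans (monotone_cdf μ hs), fun hs ↦ csInf_le hbdd hs⟩⟩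

attribute [local instance] Measure.Subtype.measureSpace

local instance : IsProbabilityMeasure (volume : Measure (Ioo (0 : ℝ) 1)) where
  measure_univ := by
    simp [Measure.Subtype.volume_univ measurableSet_Ioo.nullMeasurableSet]

lemma volume_setOf_coe_le {c : ℝ} (hc : c ∈ Icc (0 : ℝ) 1) :
    volume {u : Ioo (0 : ℝ) 1 | (u : ℝ) ≤ c} = ENNReal.ofReal c := by
  calc volume {u : Ioo (0 : ℝ) 1 | (u : ℝ) ≤ c} = volume (Ioo 0 1 ∩ Iic c) := by
        rw [Measure.Subtype.volume_def, comap_subtype_coe_apply measurableSet_Ioo,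
          ← Subtype.image_preimage_coe]
        rfl
    _ = volume (Ioc 0 1 ∩ Iic c) := measure_congr (Ioo_ae_eq_Ioc.inter (ae_eq_refl _))
    _ = ENNReal.ofReal c := by
        rw [Ioc_inter_Iic, Real.volume_Ioc, min_eq_right hc.2, sub_zero]

lemma midPValue_volume_Ioo (u : Ioo (0 : ℝ) 1) : midPValue volume u = 1 - u := by
  have hIci : volume.real (Ici u) = 1 - (u : ℝ) := by
    rw [Measure.real, Measure.Subtype.volume_def, comap_subtype_coe_apply measurableSet_Ioo,
      image_subtype_val_Ioo_Ici, ← Measure.real, Real.volume_real_Ico_of_le u.2.2.le]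
  have hIoi : volume.real (Ioi u) = 1 - (u : ℝ) := by
    rw [Measure.real, Measure.Subtype.volume_def, comap_subtype_coe_apply measurableSet_Ioo,
      image_subtype_val_Ioo_Ioi, ← Measure.real, Real.volume_real_Ioo_of_le u.2.2.le]
  rw [midPValue, hIci, hIoi]
  ring

lemma exists_monotone_map_volume_Ioo_eq [IsProbabilityMeasure μ] :
    ∃ T : Ioo (0 : ℝ) 1 → ℝ, Monotone T ∧ volume.map T = μ := by
  choose T hT using exists_quantile μ
  have hmono : Monotone T := fun u v huv ↦
    (hT u _).2 ((Subtype.coe_le_coe.2 huv).trans ((hT v _).1 le_rfl))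
  refine ⟨T, hmono, Measure.ext_of_Iic _ _ fun t ↦ ?_⟩
  rw [Measure.map_apply hmono.measurable measurableSet_Iic, ← ofReal_cdf,
    ← volume_setOf_coe_le ⟨cdf_nonneg μ t, cdf_le_one μ t⟩]
  congr 1
  ext u
  exact hT u t

lemma subUniformMeasure_map_midPValue [IsProbabilityMeasure μ] :
    SubUniformMeasure (μ.map (midPValue μ)) := by
  intro h hh _
  have hcont : Continuous h := continuousOn_univ.1 (hh.continuousOn isOpen_univ)
  have hmeas := (measurable_midPValue μ).aemeasurable (μ := μ)
  refine ⟨(integrable_map_measure hcont.aestronglyMeasurable hmeas).2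
    (integrable_comp_midPValue μ hcont), ?_⟩
  obtain ⟨T, hT, hmap⟩ := exists_monotone_map_volume_Ioo_eq μ
  calc ∫ x, h x ∂μ.map (midPValue μ) = ∫ t, h (midPValue μ t) ∂μ :=
        integral_map hmeas hcont.aestronglyMeasurable
    _ ≤ ∫ u : Ioo (0 : ℝ) 1, h (midPValue volume u) := by
        rw [← hmap]
        exact integral_comp_midPValue_map_le volume hh hT
    _ = ∫ u in (0 : ℝ)..1, h (1 - u) := by
        simp_rw [midPValue_volume_Ioo]
        rw [integral_subtype measurableSet_Ioo (fun u : ℝ ↦ h (1 - u)),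
          intervalIntegral.integral_of_le zero_le_one, integral_Ioc_eq_integral_Ioo]
    _ = ∫ x in Icc (0 : ℝ) 1, h x := by
        rw [intervalIntegral.integral_comp_sub_left, sub_self, sub_zero,
          intervalIntegral.integral_of_le zero_le_one, integral_Icc_eq_integral_Ioc]

end Quantile

section Support

lemma measureSupport_eq_support (ν : Measure ℝ) : measureSupport ν = ν.support :=
  ext fun _ ↦ (Measure.mem_support_iff_forall ..).symm

section ConditionallyCompleteLinearOrder

variable {α : Type*} [ConditionallyCompleteLinearOrder α] [TopologicalSpace α] [OrderTopology α]
  [SecondCountableTopology α] [MeasurableSpace α] {ν : Measure α}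

lemma exists_mem_support_measure_Iic_eq {y : α} (hy : 0 < ν (Iic y)) :
    ∃ s ∈ ν.support, s ≤ y ∧ ν (Iic s) = ν (Iic y) := by
  have hbdd : BddAbove (ν.support ∩ Iic y) := bddAbove_Iic.mono inter_subset_right
  have hmem : sSup (ν.support ∩ Iic y) ∈ ν.support ∩ Iic y :=
    (Measure.isClosed_support.inter isClosed_Iic).csSup_mem
      (inter_comm _ _ ▸ Measure.nonempty_inter_support_of_pos hy) hbdd
  refine ⟨_, hmem.1, hmem.2, (measure_mono (Iic_subset_Iic.2 hmem.2)).antisymm ?_⟩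
  refine measure_mono_ae ?_
  filter_upwards [Measure.support_mem_ae (μ := ν)] with t ht hty using le_csSup hbdd ⟨ht, hty⟩

lemma measure_Iic_le_of_forall_mem_support {W : Measure α} {x : α}
    (h : ∀ s ∈ ν.support, s < x → ν (Iic s) ≤ W (Iic s)) {y : α} (hy : y < x) :
    ν (Iic y) ≤ W (Iic y) := by
  obtain hzero | hpos := (zero_le (a := ν (Iic y))).eq_or_lt
  · simp [← hzero]
  obtain ⟨s, hs, hsy, hsF⟩ := exists_mem_support_measure_Iic_eq hpos
  calc ν (Iic y) = ν (Iic s) := hsF.symm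
    _ ≤ W (Iic s) := h s hs (hsy.trans_lt hy)
    _ ≤ W (Iic y) := measure_mono (Iic_subset_Iic.2 hsy)

end ConditionallyCompleteLinearOrder

lemma isClosed_setOf_le_measureReal_Iic (ν : Measure ℝ) [IsProbabilityMeasure ν] :
    IsClosed {y | y ≤ ν.real (Iic y)} := by
  simp_rw [← ProbabilityTheory.cdf_eq_real]
  exact (upperSemicontinuous_iff_IsClosed_hypograph.1
    (upperSemicontinuous_stieltjesFunction _)).preimage (continuous_id.prodMk continuous_id)

end Support

section IntegratedCdf

/-- The integrated distribution function `∫_{-∞}^x F_μ(s) ds` of a measure on the line, encoded as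
the expectation of `(x - w)⁺`. -/
noncomputable def integratedCdf (μ : Measure ℝ) (x : ℝ) : ℝ := ∫ w, max (x - w) 0 ∂μ

lemma convexOn_max_const_sub (c : ℝ) : ConvexOn ℝ univ fun w : ℝ ↦ max (c - w) 0 :=
  ((convexOn_const c convex_univ).sub (concaveOn_id convex_univ)).sup
    (convexOn_const 0 convex_univ)

lemma integral_Icc_max_const_sub {c : ℝ} (hc : c ∈ Icc (0 : ℝ) 1) :
    ∫ w in Icc (0 : ℝ) 1, max (c - w) 0 = c ^ 2 / 2 := by
  have hint : ∀ a b : ℝ, IntervalIntegrable (fun w ↦ max (c - w) 0) volume a b := fun a b ↦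
    Continuous.intervalIntegrable (by fun_prop) a b
  have hleft : ∫ w in (0 : ℝ)..c, max (c - w) 0 = c ^ 2 / 2 := by
    rw [intervalIntegral.integral_congr (g := fun w ↦ c - w) fun w hw ↦
      max_eq_left (sub_nonneg.2 (uIcc_of_le hc.1 ▸ hw).2)]
    rw [intervalIntegral.integral_sub (by simp) (by simp)]
    simp only [intervalIntegral.integral_const, integral_id, smul_eq_mul]
    ring
  have hright : ∫ w in c..1, max (c - w) 0 = 0 := by
    rw [intervalIntegral.integral_congr (g := fun _ ↦ 0) fun w hw ↦
      max_eq_right (sub_nonpos.2 (uIcc_of_le hc.2 ▸ hw).1)]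
    simp
  rw [integral_Icc_eq_integral_Ioc, ← intervalIntegral.integral_of_le zero_le_one,
    ← intervalIntegral.integral_add_adjacent_intervals (hint 0 c) (hint c 1), hleft, hright,
    add_zero]

lemma lintegral_ofReal_max_const_sub (μ : Measure ℝ) (x : ℝ) :
    ∫⁻ w, ENNReal.ofReal (max (x - w) 0) ∂μ = ∫⁻ t in Ioi 0, μ (Iic (x - t)) := by
  rw [lintegral_eq_lintegral_meas_le μ (f := fun w ↦ max (x - w) 0)
    (.of_forall fun _ ↦ le_max_right _ _) (by fun_prop)]
  refine setLIntegral_congr_fun measurableSet_Ioi fun t (ht : 0 < t) ↦ ?_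
  congr 1
  ext w
  simp [ht.not_ge, le_sub_comm]

lemma integratedCdf_le_of_measure_Iic_le {μ ν : Measure ℝ} {x : ℝ}
    (hν : Integrable (fun w ↦ max (x - w) 0) ν) (h : ∀ y < x, μ (Iic y) ≤ ν (Iic y)) :
    integratedCdf μ x ≤ integratedCdf ν x := by
  have integratedCdf_eq (ρ : Measure ℝ) :
      integratedCdf ρ x = (∫⁻ w, ENNReal.ofReal (max (x - w) 0) ∂ρ).toReal :=
    integral_eq_lintegral_of_nonneg_ae (.of_forall fun _ ↦ le_max_right _ _)
      (by fun_prop)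
  rw [integratedCdf_eq, integratedCdf_eq]
  refine ENNReal.toReal_mono hν.lintegral_lt_top.ne ?_
  rw [lintegral_ofReal_max_const_sub, lintegral_ofReal_max_const_sub]
  exact setLIntegral_mono' measurableSet_Ioi fun t ht ↦ h _ (sub_lt_self x ht)

lemma integratedCdf_add_mul_le {μ : Measure ℝ} [IsFiniteMeasure μ]
    {x c : ℝ} (hx : Integrable (fun w ↦ max (x - w) 0) μ)
    (hc : Integrable (fun w ↦ max (c - w) 0) μ) :
    integratedCdf μ x + (c - x) * μ.real (Iic x) ≤ integratedCdf μ c := by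
  have hstep : Integrable ((Iic x).indicator fun _ ↦ c - x) μ :=
    (integrable_const _).indicator measurableSet_Iic
  calc integratedCdf μ x + (c - x) * μ.real (Iic x)
      = ∫ w, max (x - w) 0 + (Iic x).indicator (fun _ ↦ c - x) w ∂μ := by
        rw [integral_add hx hstep, integral_indicator_const _ measurableSet_Iic, smul_eq_mul,
          mul_comm, integratedCdf]
    _ ≤ integratedCdf μ c := integral_mono (hx.add hstep) hc fun w ↦ by
        by_cases hw : w ≤ x
        · simp [hw]
        · simp [hw, (not_le.1 hw).le]

namespace SubUniformMeasure

variable {W : Measure ℝ}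

lemma integrable_max_const_sub (hW : SubUniformMeasure W) (c : ℝ) :
    Integrable (fun w ↦ max (c - w) 0) W :=
  (hW _ (convexOn_max_const_sub c) (by simp)).1

lemma integratedCdf_le (hW : SubUniformMeasure W) {c : ℝ} (hc : c ∈ Icc (0 : ℝ) 1) :
    integratedCdf W c ≤ c ^ 2 / 2 :=
  integral_Icc_max_const_sub hc ▸ (hW _ (convexOn_max_const_sub c) (by simp)).2

-- The tangent of `integratedCdf W` at `x` is compared with `c ^ 2 / 2` at `c = F_W x`.
lemma integratedCdf_le_mul_sub_sq [IsProbabilityMeasure W] (hW : SubUniformMeasure W) (x : ℝ) :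
    integratedCdf W x ≤ x * W.real (Iic x) - W.real (Iic x) ^ 2 / 2 := by
  have htangent := integratedCdf_add_mul_le (hW.integrable_max_const_sub x)
    (hW.integrable_max_const_sub (W.real (Iic x)))
  have hle := hW.integratedCdf_le ⟨measureReal_nonneg, measureReal_le_one (μ := W) (s := Iic x)⟩
  linarith

end SubUniformMeasure

end IntegratedCdf

section MidPValueLaw

variable {α : Type*} [LinearOrder α] [TopologicalSpace α] [OrderTopology α]
  [MeasurableSpace α] [BorelSpace α] (μ : Measure α)

section IsFiniteMeasure

variable [IsFiniteMeasure μ]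

lemma midPValue_le_measureReal_map_Iic (t : α) :
    midPValue μ t ≤ (μ.map (midPValue μ)).real (Iic (midPValue μ t)) := by
  rw [map_measureReal_apply (measurable_midPValue μ) measurableSet_Iic]
  exact (midPValue_le_measureReal_Ici μ t).trans
    (measureReal_mono fun s hs ↦ antitone_midPValue μ hs)

lemma support_map_midPValue_subset_Ici : (μ.map (midPValue μ)).support ⊆ Ici 0 :=
  Measure.support_subset_of_isClosed isClosed_Ici <|
    (ae_map_iff (measurable_midPValue μ).aemeasurable measurableSet_Ici).2 <|
      .of_forall (midPValue_nonneg μ)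

lemma integratedCdf_map_midPValue [SecondCountableTopology α] (x : ℝ) :
    integratedCdf (μ.map (midPValue μ)) x =
      x * (μ.map (midPValue μ)).real (Iic x) - (μ.map (midPValue μ)).real (Iic x) ^ 2 / 2 := by
  have hmeas := measurable_midPValue μ
  have hS : MeasurableSet (midPValue μ ⁻¹' Iic x) := hmeas measurableSet_Iic
  have hupper : IsUpperSet (midPValue μ ⁻¹' Iic x) := fun s t hst hs ↦
    (antitone_midPValue μ hst).trans hs
  have hhinge : (fun t ↦ max (x - midPValue μ t) 0) =
      (midPValue μ ⁻¹' Iic x).indicator fun t ↦ x - midPValue μ t := by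
    ext t
    by_cases ht : midPValue μ t ≤ x
    · simp [ht]
    · simp [ht, (not_le.1 ht).le]
  rw [integratedCdf, integral_map hmeas.aemeasurable (by fun_prop), hhinge,
    integral_indicator hS, integral_sub (integrable_const x) (integrable_midPValue μ).integrableOn,
    setIntegral_midPValue_of_isUpperSet μ hupper, setIntegral_const, smul_eq_mul, mul_comm,
    map_measureReal_apply hmeas measurableSet_Iic]

end IsFiniteMeasure

variable [IsProbabilityMeasure μ]

lemma le_measureReal_map_midPValue_Iic_of_mem_support {x : ℝ}
    (hx : x ∈ (μ.map (midPValue μ)).support) : x ≤ (μ.map (midPValue μ)).real (Iic x) := by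
  have := Measure.isProbabilityMeasure_map (measurable_midPValue μ).aemeasurable (μ := μ)
  have hclosed := isClosed_setOf_le_measureReal_Iic (μ.map (midPValue μ))
  refine Measure.support_subset_of_isClosed hclosed ?_ hx
  exact (ae_map_iff (measurable_midPValue μ).aemeasurable hclosed.measurableSet).2
    (.of_forall (midPValue_le_measureReal_map_Iic μ))

lemma SubUniformMeasure.measureReal_Iic_le_map_midPValue [SecondCountableTopology α]
    {W : Measure ℝ} [IsProbabilityMeasure W] (hW : SubUniformMeasure W) {x : ℝ}
    (hx : x ∈ (μ.map (midPValue μ)).support)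
    (hagree : ∀ y ∈ (μ.map (midPValue μ)).support ∩ Ico 0 x,
      W (Iic y) = μ.map (midPValue μ) (Iic y)) :
    W.real (Iic x) ≤ (μ.map (midPValue μ)).real (Iic x) := by
  have hψ : integratedCdf (μ.map (midPValue μ)) x ≤ integratedCdf W x :=
    integratedCdf_le_of_measure_Iic_le (hW.integrable_max_const_sub x) fun _ ↦
      measure_Iic_le_of_forall_mem_support fun s hs hsx ↦
        (hagree s ⟨hs, support_map_midPValue_subset_Ici μ hs, hsx⟩).ge
  have hψW := hW.integratedCdf_le_mul_sub_sq x
  have hψQ := integratedCdf_map_midPValue μ x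
  have hxQ := le_measureReal_map_midPValue_Iic_of_mem_support μ hx
  set a := (μ.map (midPValue μ)).real (Iic x)
  set b := W.real (Iic x)
  have hprod : 0 ≤ (b - a) * (x - (a + b) / 2) := by linarith
  by_contra! hab
  exact hprod.not_gt (mul_neg_of_pos_of_neg (sub_pos.2 hab) (by linarith))

end MidPValueLaw

open ProbabilityTheory in
/-- Lemma 1 of the paper: mid-p-value distributions are *extremely liberal* among
sub-uniform distributions.  Let `Q = q(T)` be a mid-p-value under its null
hypothesis `T ∼ μ₀`, with law `ν`, support `S_Q = measureSupport ν` and distribution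
function `F_Q(x) = ν(-∞, x]`.  For every `x ∈ S_Q`,
`F_Q(x) = sup { F_W(x) : F_W sub-uniform and F_W = F_Q on S_Q ∩ [0, x) }`,
the constraint being vacuous when `S_Q ∩ [0, x)` is empty. -/
theorem midP_cdf_extremely_liberal (μ₀ : Measure ℝ) [IsProbabilityMeasure μ₀]
    (q : ℝ → ℝ)
    (hq : ∀ t, q t = (1/2) * (μ₀ (Set.Ici t)).toReal + (1/2) * (μ₀ (Set.Ioi t)).toReal)
    (ν : Measure ℝ) (hν : ν = μ₀.map q)
    (x : ℝ) (hx : x ∈ measureSupport ν) :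
    (ν (Set.Iic x)).toReal =
      sSup {v : ℝ | ∃ W : Measure ℝ, IsProbabilityMeasure W ∧ SubUniformMeasure W ∧
        (∀ y ∈ measureSupport ν ∩ Set.Ico 0 x,
          (W (Set.Iic y)).toReal = (ν (Set.Iic y)).toReal) ∧
        v = (W (Set.Iic x)).toReal} := by
  obtain rfl : q = midPValue μ₀ := funext fun t ↦ by
    rw [hq, midPValue, measureReal_def, measureReal_def]
    ring
  subst hν
  have hprob : IsProbabilityMeasure (μ₀.map (midPValue μ₀)) :=
    Measure.isProbabilityMeasure_map (measurable_midPValue μ₀).aemeasurable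
  rw [measureSupport_eq_support] at hx ⊢
  symm
  refine IsGreatest.csSup_eq
    ⟨⟨_, hprob, subUniformMeasure_map_midPValue μ₀, fun _ _ ↦ rfl, rfl⟩, ?_⟩
  rintro _ ⟨W, hWprob, hW, hagree, rfl⟩
  exact hW.measureReal_Iic_le_map_midPValue μ₀ hx fun y hy ↦
    (ENNReal.toReal_eq_toReal_iff' (by finiteness) (by finiteness)).1 (hagree y hy)
end
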